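/- arXiv:1708.08445 — 2 statements merged into one kernel-verified Lean document; each statement's English description precedes it below -/
import Mathlib

section
/- For all real numbers x, y, z > 0, l(x) + l(y) + l(z) − l( xyz/(1 + x + y + z + xy + xz + yz) ) = l(x/(1+y)) + l((1+x+y)z/((1+x)(1+y))) + l(xy/((1+x+y)(1+z))) + l(y/(1+x)). -/
/-!
The function `g t = L(t/(1+t))` satisfies `g' t = (log (1+t) / t - log t / (1+t)) / 2` for `t > 0`
and extends continuously to `t = 0` with value `0`. Differentiating in `y` (all logarithms expand
into `log x`, `log y`, `log (1+x)`, `log (1+y)`, `log (1+x+y)`, whose coefficients cancel) and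
letting `y → 0` gives the pentagon relation
`g x + g y = g (x/(1+y)) + g (xy/(1+x+y)) + g (y/(1+x))`.
Applying it to `(x, y)`, and then to `(A, z)` with `A = xy/(1+x+y)`, eliminates `g A` and yields the
three-variable identity.
-/

open Matrix BigOperators

noncomputable section

/-- The dilogarithm function `Li₂`. -/
def dilog (x : ℝ) : ℝ := ∑' k : ℕ, x ^ (k + 1) / ((k : ℝ) + 1) ^ 2

/-- The Rogers dilogarithm `L(x) = Li₂(x) + (1/2) log x log (1-x)`. -/
def rogersL (x : ℝ) : ℝ := dilog x + (1 / 2) * Real.log x * Real.log (1 - x)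

/-- `l(x) = (6/π²) L(x/(1+x))`. -/
def ell (x : ℝ) : ℝ := 6 / Real.pi ^ 2 * rogersL (x / (1 + x))

/-- The minor of `M` on rows `I` and columns `J` (both taken in increasing order);
by convention it is `0` if the cardinalities disagree, and `1` for `I = J = ∅`. -/
def gminor {n : ℕ} (M : Matrix (Fin n) (Fin n) ℝ) (I J : Finset (Fin n)) : ℝ :=
  if h : J.card = I.card then
    Matrix.det (Matrix.of fun i j : Fin I.card =>
      M (I.orderEmbOfFin rfl i) (J.orderEmbOfFin h j))
  else 0

/-- The 1-based interval `[a,b]` regarded as a finset of `Fin n`. -/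
def iv (n a b : ℕ) : Finset (Fin n) :=
  Finset.univ.filter fun i => a ≤ (i : ℕ) + 1 ∧ (i : ℕ) + 1 ≤ b

/-- The last `k` columns (as a finset of `Fin n`). -/
def lastCols (n k : ℕ) : Finset (Fin n) := Finset.univ.filter fun j => n - k ≤ (j : ℕ)

/-- The first `k` rows (as a finset of `Fin n`). -/
def firstRows (n k : ℕ) : Finset (Fin n) := Finset.univ.filter fun i => (i : ℕ) < k

/-- The right flag minor `Δ_I`: rows `I`, last `|I|` columns. -/
def flagR {n : ℕ} (M : Matrix (Fin n) (Fin n) ℝ) (I : Finset (Fin n)) : ℝ :=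
  gminor M I (lastCols n I.card)

/-- The upper flag minor `Δ^J`: first `|J|` rows, columns `J`. -/
def flagU {n : ℕ} (M : Matrix (Fin n) (Fin n) ℝ) (J : Finset (Fin n)) : ℝ :=
  gminor M (firstRows n J.card) J

/-- `Ī = {n+1-a : a ∈ I}` (in 1-based labelling; `Fin.rev` in 0-based labelling). -/
def barSet {n : ℕ} (I : Finset (Fin n)) : Finset (Fin n) := I.image Fin.rev

/-- `B_n`: invertible upper triangular real matrices. -/
def Bset (n : ℕ) : Set (Matrix (Fin n) (Fin n) ℝ) :=
  {M | M.BlockTriangular id ∧ IsUnit M.det}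

/-- `N_n`: unipotent upper triangular real matrices. -/
def Nset (n : ℕ) : Set (Matrix (Fin n) (Fin n) ℝ) :=
  {M | M.BlockTriangular id ∧ ∀ i, M i i = 1}

/-- `M` is totally positive with respect to a class `S` of matrices: `M ∈ S` and every minor
that does not vanish identically on `S` is positive. -/
def totPos {n : ℕ} (S : Set (Matrix (Fin n) (Fin n) ℝ)) (M : Matrix (Fin n) (Fin n) ℝ) : Prop :=
  M ∈ S ∧ ∀ I J : Finset (Fin n), I.card = J.card →
    (∃ A ∈ S, gminor A I J ≠ 0) → 0 < gminor M I J

/-- `B_n^+`: totally positive matrices in `B_n`. -/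
def Bpos (n : ℕ) (M : Matrix (Fin n) (Fin n) ℝ) : Prop := totPos (Bset n) M

/-- `N_n^+`: totally positive matrices in `N_n`. -/
def Npos (n : ℕ) (M : Matrix (Fin n) (Fin n) ℝ) : Prop := totPos (Nset n) M

/-- The permutation matrix `P` with `P_{ij} = δ_{i+j,n+1}` (1-based). -/
def Pmat (n : ℕ) : Matrix (Fin n) (Fin n) ℝ :=
  Matrix.of fun i j => if (i : ℕ) + (j : ℕ) + 2 = n + 1 then 1 else 0

/-- `Decomp n M M₁ M₂ D` asserts `P M P = M₁ P D M₂` with `M₁, M₂ ∈ N_n^+` and `D` diagonal;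
i.e. `M₁ = M′`, `M₂ = M″`, `D = D_M`. -/
def Decomp (n : ℕ) (M M₁ M₂ D : Matrix (Fin n) (Fin n) ℝ) : Prop :=
  Npos n M₁ ∧ Npos n M₂ ∧ D.IsDiag ∧
    Pmat n * M * Pmat n = M₁ * Pmat n * D * M₂

/-- `J_k(x) = exp(x e_k) = 1 + x e_k` where `(e_k)_{ij} = δ_{ik} δ_{j,k+1}` (1-based). -/
def Jmat (n : ℕ) (k : ℕ) (x : ℝ) : Matrix (Fin n) (Fin n) ℝ :=
  1 + Matrix.of fun (i j : Fin n) => if (i : ℕ) + 1 = k ∧ (j : ℕ) = k then x else 0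

/-- The matrix `𝕁_1 ⋯ 𝕁_{n-1}` with `𝕁_k = J_k(x_{1,k+1}) ⋯ J_1(x_{k,k+1})`,
for a (1-based) coordinate function `x`. -/
def jacobiMat (n : ℕ) (x : ℕ → ℕ → ℝ) : Matrix (Fin n) (Fin n) ℝ :=
  (((List.range (n - 1)).map fun p =>
      (((List.range (p + 1)).map fun m => Jmat n (p + 1 - m) (x (m + 1) (p + 2))).prod)).prod)

/-- `x` is the collection of Jacobi coordinates of `M`: all `x i j` (for `1 ≤ i < j ≤ n`) are
positive and `M = 𝕁_1 ⋯ 𝕁_{n-1}`. -/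
def IsJacobi (n : ℕ) (M : Matrix (Fin n) (Fin n) ℝ) (x : ℕ → ℕ → ℝ) : Prop :=
  (∀ i j, 1 ≤ i → i < j → j ≤ n → 0 < x i j) ∧ M = jacobiMat n x

/-- The Y-variable `Y_{abc}(M)`. -/
def Yr (n : ℕ) (M : Matrix (Fin n) (Fin n) ℝ) (a b c : ℕ) : ℝ :=
  flagR M (iv n a (b-1) ∪ iv n (c+1) n) * flagR M (iv n (a+1) b ∪ iv n c n) /
    (flagR M (iv n a b ∪ iv n (c+1) n) * flagR M (iv n (a+1) (b-1) ∪ iv n c n))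

/-- The Y-variable `Ỹ_{abc}(M)`. -/
def Ytr (n : ℕ) (M : Matrix (Fin n) (Fin n) ℝ) (a b c : ℕ) : ℝ :=
  flagR M (iv n 1 a ∪ iv n (b+1) (c-1)) * flagR M (iv n 1 (a-1) ∪ iv n b c) /
    (flagR M (iv n 1 a ∪ iv n b (c-1)) * flagR M (iv n 1 (a-1) ∪ iv n (b+1) c))

/-- The Y-variable `Y^{abc}(M)`. -/
def Yu (n : ℕ) (M : Matrix (Fin n) (Fin n) ℝ) (a b c : ℕ) : ℝ :=
  flagU M (iv n a b ∪ iv n (c+1) n) * flagU M (iv n (a+1) (b-1) ∪ iv n c n) /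
    (flagU M (iv n a (b-1) ∪ iv n (c+1) n) * flagU M (iv n (a+1) b ∪ iv n c n))

/-- The Y-variable `Ỹ^{abc}(M)`. -/
def Ytu (n : ℕ) (M : Matrix (Fin n) (Fin n) ℝ) (a b c : ℕ) : ℝ :=
  flagU M (iv n 1 a ∪ iv n b (c-1)) * flagU M (iv n 1 (a-1) ∪ iv n (b+1) c) /
    (flagU M (iv n 1 a ∪ iv n (b+1) (c-1)) * flagU M (iv n 1 (a-1) ∪ iv n b c))

/-- The discrete tetrahedron `T_n = {(a,b,c) : 1 ≤ a < b < c ≤ n}`. -/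
def Tset (n : ℕ) : Finset (ℕ × ℕ × ℕ) :=
  ((Finset.range (n+1)) ×ˢ (Finset.range (n+1)) ×ˢ (Finset.range (n+1))).filter
    fun t => 1 ≤ t.1 ∧ t.1 < t.2.1 ∧ t.2.1 < t.2.2 ∧ t.2.2 ≤ n


/-- The termwise derivative of the dilogarithm series on the unit interval. -/
lemma hasDerivAt_dilog_tsum {x : ℝ} (hx : |x| < 1) :
    HasDerivAt dilog (∑' k : ℕ, x ^ k / ((k : ℝ) + 1)) x := by
  obtain ⟨r, hr, hr1⟩ := exists_between hx
  have hr0 : 0 ≤ r := (abs_nonneg x).trans hr.le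
  refine hasDerivAt_tsum_of_isPreconnected (u := fun k : ℕ => r ^ k) (t := Metric.ball (0 : ℝ) r)
    (y₀ := 0) (g := fun (k : ℕ) (x : ℝ) => x ^ (k + 1) / ((k : ℝ) + 1) ^ 2)
    (g' := fun (k : ℕ) (x : ℝ) => x ^ k / ((k : ℝ) + 1))
    (summable_geometric_of_lt_one hr0 hr1) Metric.isOpen_ball
    (convex_ball _ _).isPreconnected ?_ ?_ ?_ ?_ ?_
  · intro k y _
    have h : ((k : ℝ) + 1) ≠ 0 := by positivity
    refine ((hasDerivAt_pow (k + 1) y).div_const _).congr_deriv ?_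
    push_cast
    field_simp
  · intro k y hy
    rw [mem_ball_zero_iff, Real.norm_eq_abs] at hy
    rw [norm_div, norm_pow, Real.norm_eq_abs, Real.norm_of_nonneg (by positivity)]
    calc |y| ^ k / ((k : ℝ) + 1) ≤ |y| ^ k :=
          div_le_self (by positivity) (by linarith [(Nat.cast_nonneg k : (0 : ℝ) ≤ k)])
      _ ≤ r ^ k := by gcongr
  · simpa using (abs_nonneg x).trans_lt hr
  · simp
  · simpa using hr

lemma hasDerivAt_dilog {x : ℝ} (h0 : x ≠ 0) (hx : |x| < 1) :
    HasDerivAt dilog (-Real.log (1 - x) / x) x := by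
  refine (hasDerivAt_dilog_tsum hx).congr_deriv ?_
  have h := (Real.hasSum_pow_div_log_of_abs_lt_one hx).div_const x
  rw [← h.tsum_eq]
  congr 1
  ext k
  rw [pow_succ]
  field_simp

/-- Continuity of `L` on `[0,1)`, including at `0`, where Mathlib's `log 0 = 0` gives `L 0 = 0`. -/
lemma continuousAt_rogersL {x : ℝ} (h0 : 0 ≤ x) (hx : x < 1) : ContinuousAt rogersL x := by
  have hd : ContinuousAt dilog x :=
    (hasDerivAt_dilog_tsum (by rwa [abs_of_nonneg h0])).continuousAt
  refine hd.add ?_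
  have hl : DifferentiableAt ℝ (fun u : ℝ => Real.log (1 - u)) x :=
    (DifferentiableAt.sub (by fun_prop) differentiableAt_id).log (by simp; linarith)
  rcases h0.eq_or_lt with rfl | hpos
  · -- `log u * log (1 - u)` is `u * log u` times a continuous difference quotient.
    have hs : ContinuousAt (dslope (fun u : ℝ => Real.log (1 - u)) 0) 0 :=
      continuousAt_dslope_same.2 hl
    have hm : ContinuousAt (fun u : ℝ => u * Real.log u) 0 := Real.continuous_mul_log.continuousAt
    have := (hm.mul hs).const_mul (1 / 2)
    refine this.congr (Filter.Eventually.of_forall fun u => ?_)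
    have h := sub_smul_dslope (fun u : ℝ => Real.log (1 - u)) 0 u
    simp only [sub_zero, smul_eq_mul, Real.log_one] at h
    simp only [Pi.mul_apply]
    rw [← h]
    ring
  · exact (continuousAt_const.mul (Real.continuousAt_log hpos.ne')).mul hl.continuousAt

/-- `g t = L(t/(1+t))`, the unnormalised form of `ell`. -/
def rogersG (t : ℝ) : ℝ := rogersL (t / (1 + t))

lemma continuousAt_rogersG {t : ℝ} (ht : 0 ≤ t) : ContinuousAt rogersG t := by
  refine ContinuousAt.comp (g := rogersL) (f := fun t : ℝ => t / (1 + t))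
    (continuousAt_rogersL (by positivity) ?_) ?_
  · rw [div_lt_one (by positivity)]; linarith
  · exact continuousAt_id.div (by fun_prop) (by positivity)

lemma rogersG_zero : rogersG 0 = 0 := by
  simp [rogersG, rogersL, dilog]

lemma hasDerivAt_rogersG {t : ℝ} (ht : 0 < t) :
    HasDerivAt rogersG ((Real.log (1 + t) / t - Real.log t / (1 + t)) / 2) t := by
  have h1 : 0 < 1 + t := by positivity
  have hu0 : 0 < t / (1 + t) := by positivity
  have hu1 : t / (1 + t) < 1 := by rw [div_lt_one h1]; linarith
  have hu2 : 1 - t / (1 + t) = (1 + t)⁻¹ := by field_simp; ring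
  have hu : HasDerivAt (fun t : ℝ => t / (1 + t)) ((1 * (1 + t) - t * 1) / (1 + t) ^ 2) t :=
    (hasDerivAt_id t).div ((hasDerivAt_id t).const_add 1) h1.ne'
  have hL : HasDerivAt rogersL _ (t / (1 + t)) :=
    (hasDerivAt_dilog hu0.ne' (by rwa [abs_of_pos hu0])).add
      (((Real.hasDerivAt_log hu0.ne').const_mul (1 / 2)).mul
        (((hasDerivAt_id _).const_sub 1).log (by simp; linarith)))
  refine (hL.comp t hu).congr_deriv ?_
  simp only [hu2, Real.log_inv, Real.log_div ht.ne' h1.ne']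
  field_simp
  ring

/-- The pentagon relation. -/
lemma rogersG_pentagon {x y : ℝ} (hx : 0 < x) (hy : 0 < y) :
    rogersG x + rogersG y =
      rogersG (x / (1 + y)) + rogersG (x * y / (1 + x + y)) + rogersG (y / (1 + x)) := by
  set F : ℝ → ℝ := fun y => rogersG x + rogersG y -
    (rogersG (x / (1 + y)) + rogersG (x * y / (1 + x + y)) + rogersG (y / (1 + x))) with hF
  have hcont : ContinuousOn F (Set.Icc 0 y) := by
    rintro s ⟨hs, -⟩
    have c1 : ContinuousAt (fun s => rogersG (x / (1 + s))) s :=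
      ContinuousAt.comp (g := rogersG) (continuousAt_rogersG (by positivity))
        (continuousAt_const.div (by fun_prop) (by positivity))
    have c2 : ContinuousAt (fun s => rogersG (x * s / (1 + x + s))) s :=
      ContinuousAt.comp (g := rogersG) (continuousAt_rogersG (by positivity))
        (ContinuousAt.div (by fun_prop) (by fun_prop) (by positivity))
    have c3 : ContinuousAt (fun s => rogersG (s / (1 + x))) s :=
      ContinuousAt.comp (g := rogersG) (continuousAt_rogersG (by positivity)) (by fun_prop)
    exact ((continuousAt_const.add (continuousAt_rogersG hs)).sub
      ((c1.add c2).add c3)).continuousWithinAt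
  have hderiv : ∀ s ∈ Set.Ioo 0 y, HasDerivAt F 0 s := by
    rintro s ⟨hs, -⟩
    have p1 : 0 < 1 + s := by positivity
    have p2 : 0 < 1 + x + s := by positivity
    have p3 : 0 < 1 + x := by positivity
    have e1 : HasDerivAt (fun s => x / (1 + s)) ((0 * (1 + s) - x * 1) / (1 + s) ^ 2) s :=
      (hasDerivAt_const s x).div ((hasDerivAt_id s).const_add 1) p1.ne'
    have e2 : HasDerivAt (fun s => x * s / (1 + x + s))
        ((x * 1 * (1 + x + s) - x * s * 1) / (1 + x + s) ^ 2) s :=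
      ((hasDerivAt_id s).const_mul x).div ((hasDerivAt_id s).const_add (1 + x)) p2.ne'
    have e3 : HasDerivAt (fun s => s / (1 + x)) (1 / (1 + x)) s :=
      (hasDerivAt_id s).div_const _
    have d1 := (hasDerivAt_rogersG (t := x / (1 + s)) (by positivity)).comp s e1
    have d2 := (hasDerivAt_rogersG (t := x * s / (1 + x + s)) (by positivity)).comp s e2
    have d3 := (hasDerivAt_rogersG (t := s / (1 + x)) (by positivity)).comp s e3
    refine (((hasDerivAt_rogersG hs).const_add (rogersG x)).sub
      ((d1.add d2).add d3)).congr_deriv ?_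
    have q1 : 1 + x / (1 + s) = (1 + x + s) / (1 + s) := by field_simp; ring
    have q2 : 1 + x * s / (1 + x + s) = (1 + x) * (1 + s) / (1 + x + s) := by field_simp; ring
    have q3 : 1 + s / (1 + x) = (1 + x + s) / (1 + x) := by field_simp
    rw [q1, q2, q3, Real.log_div p2.ne' p1.ne', Real.log_div hx.ne' p1.ne',
      Real.log_div (by positivity) p2.ne', Real.log_mul p3.ne' p1.ne',
      Real.log_div (by positivity) p2.ne', Real.log_mul hx.ne' hs.ne',
      Real.log_div p2.ne' p3.ne', Real.log_div hs.ne' p3.ne']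
    field_simp
    ring
  obtain ⟨c, hc, h⟩ := exists_hasDerivAt_eq_slope F (fun _ => 0) hy hcont hderiv
  have h0 : F 0 = 0 := by simp [hF, rogersG_zero]
  rw [h0, eq_comm, div_eq_zero_iff] at h
  have : F y = 0 := by rcases h with h | h <;> linarith
  simp only [hF] at this
  linarith

/-- The three-variable dilogarithm identity obtained from two applications of
the pentagon relation. -/
theorem stmt_1 (x y z : ℝ) (hx : 0 < x) (hy : 0 < y) (hz : 0 < z) :
    ell x + ell y + ell z -
        ell (x * y * z / (1 + x + y + z + x * y + x * z + y * z)) =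
      ell (x / (1 + y)) + ell ((1 + x + y) * z / ((1 + x) * (1 + y))) +
        ell (x * y / ((1 + x + y) * (1 + z))) + ell (y / (1 + x)) := by
  have h1 := rogersG_pentagon hx hy
  have h2 := rogersG_pentagon (x := x * y / (1 + x + y)) (by positivity) hz
  have a1 : x * y / (1 + x + y) / (1 + z) = x * y / ((1 + x + y) * (1 + z)) := by
    rw [div_div]
  have a2 : z / (1 + x * y / (1 + x + y)) = (1 + x + y) * z / ((1 + x) * (1 + y)) := by
    have : 1 + x * y / (1 + x + y) = (1 + x) * (1 + y) / (1 + x + y) := by field_simp; ring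
    rw [this]; field_simp
  have a3 : x * y / (1 + x + y) * z / (1 + x * y / (1 + x + y) + z) =
      x * y * z / (1 + x + y + z + x * y + x * z + y * z) := by
    have : 1 + x * y / (1 + x + y) + z =
        (1 + x + y + z + x * y + x * z + y * z) / (1 + x + y) := by field_simp; ring
    rw [this]; field_simp
  rw [a1, a2, a3] at h2
  change _ * rogersG _ + _ * rogersG _ + _ * rogersG _ - _ * rogersG _ =
    _ * rogersG _ + _ * rogersG _ + _ * rogersG _ + _ * rogersG _
  linear_combination 6 / Real.pi ^ 2 * (h1 + h2)

end
end

section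
/- For every M ∈ N_n^+, there exist unique matrices M′, M″ ∈ N_n^+ and a unique diagonal matrix D_M such that P M P = M′ P D_M M″, where P is the n×n permutation matrix with P_{ij} = δ_{i+j,n+1}. -/
/-!
Multiplying `P M P = M′ P D M″` by `P` on the left gives `M P = (P M′ P) D M″`, which is an `LDU`
factorization of `M P`: the factor `P M′ P` is lower unitriangular and `M″` is upper unitriangular.
Uniqueness is therefore that of the `LDU` factorization of an invertible matrix (`ldu_unique`).
The leading principal minors of `M P` are, up to sign, minors of `M` on the first `k` rows and the
last `k` columns, which are positive, so the factorization exists (`exists_ldu`).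

For total positivity, up to a sign depending only on `k`, the minors of `M P` on its first `k` rows
are minors of `M` on its first `k` rows, and the minors on its first `k` columns are minors of `M`
on its last `k` columns. All of these minors of `M` are positive, and minors of `M P` on the first
`k` rows agree with those of `U` up to a factor depending only on `k` (`flag_minor_ldu`). Hence all
flag minors of `U`, and likewise of `Lᵀ`, are positive (`tpos_of_ldu`).

It remains that positivity of the flag minors forces positivity of every minor that can be nonzero
(`tpos_of_flagPos`). This goes by induction on `n`. After rescaling rows, the last column of the
matrix `W` consists of ones. Replacing each row but the last by its difference with the next row
clears the last column except for its bottom entry; the remaining block `V` of size `n - 1` again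
has positive flag minors (`flagPos_rowDiff`), hence is totally positive. Each row of `W` is the sum
of the row differences from its index onwards, so by multilinearity every minor of `W` is a sum of
nonnegative minors of `V ⊕ 1`, one of them positive (`tpos_of_rowDiff`).
-/


open Matrix BigOperators

noncomputable section

/-! ### Positivity of flag minors implies total positivity -/

/-- Every minor of `U` whose row indices are entrywise at most its column indices is positive;
for upper triangular `U` the other minors vanish.
Minors are indexed by strictly increasing maps rather than by finsets. -/
def TPos {n : ℕ} (U : Matrix (Fin n) (Fin n) ℝ) : Prop :=
  ∀ (k : ℕ) (f g : Fin k → Fin n), StrictMono f → StrictMono g → (∀ r, f r ≤ g r) →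
    0 < (U.submatrix f g).det

/-- Every minor of `U` on an initial interval of rows is positive. -/
def FlagPos {n : ℕ} (U : Matrix (Fin n) (Fin n) ℝ) : Prop :=
  ∀ (k : ℕ) (hk : k ≤ n) (J : Fin k → Fin n), StrictMono J →
    0 < (U.submatrix (Fin.castLE hk) J).det

/-- If `g r < f r` for some `r`, the minor of an upper triangular matrix has a zero block too large for a transversal to avoid. -/
lemma det_submatrix_eq_zero {n k : ℕ} {U : Matrix (Fin n) (Fin n) ℝ}
    (hU : ∀ i j, j < i → U i j = 0) {f g : Fin k → Fin n} (hf : StrictMono f)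
    (hg : StrictMono g) {r : Fin k} (hr : g r < f r) : (U.submatrix f g).det = 0 := by
  rw [Matrix.det_apply]
  refine Finset.sum_eq_zero fun σ _ => ?_
  have h : ∃ i, i ≤ r ∧ r ≤ σ i := by
    by_contra! h
    have := Finset.card_le_card_of_injOn (s := Finset.Iic r) (t := Finset.Iio r) σ
      (fun i hi => by simpa using h i (by simpa using hi)) σ.injective.injOn
    simp at this
  obtain ⟨i, h1, h2⟩ := h
  have h0 : ∏ i, U.submatrix f g (σ i) i = 0 := by
    refine Finset.prod_eq_zero (Finset.mem_univ i) ?_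
    exact hU _ _ ((hg.monotone h1).trans_lt (hr.trans_le (hf.monotone h2)))
  rw [h0, smul_zero]

/-- Replace each row but the last by its difference with the following row. -/
def rowDiff {k : ℕ} {m : Type*} (A : Matrix (Fin (k + 1)) m ℝ) : Matrix (Fin (k + 1)) m ℝ :=
  Matrix.of (Fin.lastCases (fun j => A (Fin.last k) j) fun r j => A r.castSucc j - A r.succ j)

@[simp] lemma rowDiff_last {k : ℕ} {m : Type*} (A : Matrix (Fin (k + 1)) m ℝ) (j : m) :
    rowDiff A (Fin.last k) j = A (Fin.last k) j := by
  simp [rowDiff]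

@[simp] lemma rowDiff_castSucc {k : ℕ} {m : Type*} (A : Matrix (Fin (k + 1)) m ℝ) (r : Fin k)
    (j : m) : rowDiff A r.castSucc j = A r.castSucc j - A r.succ j := by
  simp [rowDiff]

lemma det_rowDiff {k : ℕ} (A : Matrix (Fin (k + 1)) (Fin (k + 1)) ℝ) :
    (rowDiff A).det = A.det := by
  rw [← Matrix.det_submatrix_equiv_self Fin.revPerm A,
    ← Matrix.det_submatrix_equiv_self Fin.revPerm (rowDiff A)]
  symm
  refine Matrix.det_eq_of_forall_row_eq_smul_add_pred (fun _ => 1) ?_ ?_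
  · intro j
    simp
  · intro i j
    simp [Fin.rev_succ, Fin.rev_castSucc]

lemma det_of_last_col {k : ℕ} (A : Matrix (Fin (k + 1)) (Fin (k + 1)) ℝ)
    (h : ∀ r : Fin k, A r.castSucc (Fin.last k) = 0) :
    A.det = A (Fin.last k) (Fin.last k) * (A.submatrix Fin.castSucc Fin.castSucc).det := by
  rw [Matrix.det_succ_column A (Fin.last k), Fin.sum_univ_castSucc]
  simp [h, Fin.succAbove_last, ← two_mul]

lemma sum_rowDiff {n : ℕ} {m : Type*} (W : Matrix (Fin (n + 1)) m ℝ) (i : Fin (n + 1))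
    (s : m) : W i s = ∑ j ∈ Finset.Ici i, rowDiff W j s := by
  induction i using Fin.reverseInduction with
  | last =>
    have : Finset.Ici (Fin.last n) = {Fin.last n} := by ext; simp
    simp [this]
  | cast i ih =>
    have : Finset.Ici i.castSucc = insert i.castSucc (Finset.Ici i.succ) := by
      ext j; simp [Fin.le_def, Fin.ext_iff]; omega
    rw [this, Finset.sum_insert (by simp [Fin.le_def]), ← ih]
    simp

lemma sum_rowDiff_Ico {n : ℕ} {m : Type*} (W : Matrix (Fin (n + 1)) m ℝ) {a b : Fin (n + 1)}
    (hab : a ≤ b) (s : m) : W a s - W b s = ∑ j ∈ Finset.Ico a b, rowDiff W j s := by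
  have : Finset.Ici a = Finset.Ico a b ∪ Finset.Ici b := by
    ext j; simp only [Finset.mem_Ici, Finset.mem_union, Finset.mem_Ico]; grind
  rw [sum_rowDiff W a s, sum_rowDiff W b s, this, Finset.sum_union, add_sub_cancel_right]
  rw [Finset.disjoint_left]
  intro j; simp only [Finset.mem_Ico, Finset.mem_Ici]; grind

lemma strictMono_snoc {n k : ℕ} {J : Fin k → Fin n} (hJ : StrictMono J) :
    StrictMono (Fin.lastCases (Fin.last n) (fun r => (J r).castSucc) : Fin (k + 1) → Fin (n + 1)) := by
  intro a b
  induction a using Fin.lastCases with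
  | last => intro h; exact absurd h (not_lt.2 (Fin.le_last _))
  | cast a =>
    induction b using Fin.lastCases with
    | last => intro; simp
    | cast b => intro h; simpa using hJ (by simpa using h)

/-- When the last column of `W` consists of ones, a flag minor of the row differences is the flag minor
of `W` with one more row and the last column adjoined. -/
lemma flagPos_rowDiff {n : ℕ} {W : Matrix (Fin (n + 1)) (Fin (n + 1)) ℝ}
    (h1 : ∀ i, W i (Fin.last n) = 1) (hW : FlagPos W) :
    FlagPos ((rowDiff W).submatrix Fin.castSucc Fin.castSucc) := by
  intro k hk J hJ
  have h := hW (k + 1) (by omega) _ (strictMono_snoc hJ)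
  rw [← det_rowDiff, det_of_last_col _ (by simp [h1])] at h
  simp only [rowDiff_last, submatrix_apply (A := W), Fin.lastCases_last, h1, one_mul] at h
  convert h using 2
  ext r s
  have e1 : Fin.castLE (by omega : k + 1 ≤ n + 1) r.castSucc = (Fin.castLE hk r).castSucc := rfl
  have e2 : Fin.castLE (by omega : k + 1 ≤ n + 1) r.succ = (Fin.castLE hk r).succ := rfl
  rw [submatrix_apply, submatrix_apply, submatrix_apply, rowDiff_castSucc, rowDiff_castSucc]
  simp only [submatrix_apply, e1, e2, Fin.lastCases_castSucc]

/-- An increasing sequence whose last term is not `Fin.last n` lies in the image of `Fin n`. -/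
lemma eq_castSucc {n k : ℕ} {K : Fin (k + 1) → Fin (n + 1)} (hK : StrictMono K)
    (h : K (Fin.last k) ≠ Fin.last n) :
    ∃ K' : Fin (k + 1) → Fin n, StrictMono K' ∧ ∀ r, K r = (K' r).castSucc := by
  have hne : ∀ r, K r ≠ Fin.last n := fun r hr => h
    (le_antisymm (Fin.le_last _) (hr ▸ hK.monotone (Fin.le_last r)))
  refine ⟨fun r => (K r).castPred (hne r), fun a b hab => ?_, fun r => by simp⟩
  simpa using hK hab

lemma eq_castSucc' {n k : ℕ} {K : Fin (k + 1) → Fin (n + 1)} (hK : StrictMono K) :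
    ∃ K' : Fin k → Fin n, StrictMono K' ∧ ∀ r : Fin k, K r.castSucc = (K' r).castSucc := by
  have hne : ∀ r : Fin k, K r.castSucc ≠ Fin.last n := fun r =>
    ((hK (Fin.castSucc_lt_last r)).trans_le (Fin.le_last _)).ne
  refine ⟨fun r => (K r.castSucc).castPred (hne r), fun a b hab => ?_, fun r => by simp⟩
  simpa using hK (by simpa using hab)

lemma TPos.nonneg {n k : ℕ} {U : Matrix (Fin n) (Fin n) ℝ} (hU : TPos U)
    (ht : ∀ i j, j < i → U i j = 0) {f g : Fin k → Fin n} (hf : StrictMono f)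
    (hg : StrictMono g) : 0 ≤ (U.submatrix f g).det := by
  by_cases h : ∀ r, f r ≤ g r
  · exact (hU k f g hf hg h).le
  · push Not at h
    obtain ⟨r, hr⟩ := h
    exact (det_submatrix_eq_zero ht hf hg hr).ge

/-- Minors of a matrix that is block diagonal with blocks a totally positive matrix and `1`. -/
lemma block_minors {n k : ℕ} {V : Matrix (Fin (n + 1)) (Fin (n + 1)) ℝ}
    (hl : ∀ j : Fin n, V (Fin.last n) j.castSucc = 0)
    (hc : ∀ i : Fin n, V i.castSucc (Fin.last n) = 0) (h1 : V (Fin.last n) (Fin.last n) = 1)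
    (ht : ∀ i j, j < i → V i j = 0)
    (hV : TPos (V.submatrix Fin.castSucc Fin.castSucc)) {f g : Fin (k + 1) → Fin (n + 1)}
    (hf : StrictMono f) (hg : StrictMono g) :
    0 ≤ (V.submatrix f g).det ∧
      ((f (Fin.last k) = Fin.last n ↔ g (Fin.last k) = Fin.last n) → (∀ r, f r ≤ g r) →
        0 < (V.submatrix f g).det) := by
  have ht' : ∀ i j, j < i → V.submatrix Fin.castSucc Fin.castSucc i j = 0 :=
    fun i j h => ht _ _ (by simpa using h)
  by_cases hfl : f (Fin.last k) = Fin.last n <;> by_cases hgl : g (Fin.last k) = Fin.last n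
  · obtain ⟨f', hf', ef⟩ := eq_castSucc' hf
    obtain ⟨g', hg', eg⟩ := eq_castSucc' hg
    have e : (V.submatrix f g).det =
        ((V.submatrix Fin.castSucc Fin.castSucc).submatrix f' g').det := by
      rw [det_of_last_col _ (by simp [hgl, ef, hc])]
      simp only [submatrix_apply, hfl, hgl, h1, one_mul, submatrix_submatrix]
      congr 1
      ext r s
      simp [ef, eg]
    rw [e]
    refine ⟨hV.nonneg ht' hf' hg', fun _ h => hV _ _ _ hf' hg' fun r => ?_⟩
    have := h r.castSucc
    rw [ef, eg] at this
    simpa using this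
  · obtain ⟨g', hg', eg⟩ := eq_castSucc hg hgl
    rw [Matrix.det_eq_zero_of_row_eq_zero (Fin.last k) (by simp [hfl, eg, hl])]
    simp [hfl, hgl]
  · obtain ⟨f', hf', ef⟩ := eq_castSucc hf hfl
    rw [Matrix.det_eq_zero_of_column_eq_zero (Fin.last k) (by simp [hgl, ef, hc])]
    simp [hfl, hgl]
  · obtain ⟨f', hf', ef⟩ := eq_castSucc hf hfl
    obtain ⟨g', hg', eg⟩ := eq_castSucc hg hgl
    have e : V.submatrix f g = (V.submatrix Fin.castSucc Fin.castSucc).submatrix f' g' := by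
      ext r s; simp [ef, eg]
    rw [e]
    refine ⟨hV.nonneg ht' hf' hg', fun _ h => hV _ _ _ hf' hg' fun r => ?_⟩
    have := h r
    rw [ef, eg] at this
    simpa using this

/-- A minor of `W` expands as a sum of minors of its matrix of row differences: consecutive
selected rows of `W` differ by a sum of row differences over a half-open interval. These intervals
are disjoint and increasing, so only minors with increasing row indices occur; all are nonnegative
and one is positive. -/
lemma tpos_of_rowDiff {n : ℕ} {W : Matrix (Fin (n + 1)) (Fin (n + 1)) ℝ}
    (ht : ∀ i j, j < i → W i j = 0) (h1 : ∀ i, W i (Fin.last n) = 1)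
    (hV : TPos ((rowDiff W).submatrix Fin.castSucc Fin.castSucc)) : TPos W := by
  intro k f g hf hg hfg
  cases k with
  | zero => simp
  | succ k =>
    have htV : ∀ i j, j < i → rowDiff W i j = 0 := by
      intro i j hij
      induction i using Fin.lastCases with
      | last => simp [ht _ _ hij]
      | cast i =>
        simp [ht _ _ hij, ht i.succ j (hij.trans (Fin.castSucc_lt_succ))]
    have key := fun {K : Fin (k + 1) → Fin (n + 1)} (hK : StrictMono K) =>
      block_minors (V := rowDiff W) (by intro j; simp [ht]) (by intro i; simp [h1])
        (by simp [h1]) htV hV hK hg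
    -- The row indices of `rowDiff W` that contribute to each row of the differenced minor.
    let A : Fin (k + 1) → Finset (Fin (n + 1)) := Fin.lastCases (Finset.Ici (f (Fin.last k)))
      fun r => Finset.Ico (f r.castSucc) (f r.succ)
    have hA : ∀ r, f r ∈ A r := by
      intro r
      induction r using Fin.lastCases with
      | last => simp [A]
      | cast r => simpa [A] using hf (Fin.castSucc_lt_succ (i := r))
    have hA' : ∀ r x, x ∈ A r → f r ≤ x := by
      intro r
      induction r using Fin.lastCases with
      | last => simp [A]
      | cast r => simp +contextual [A]
    have hmono : ∀ K ∈ Fintype.piFinset A, StrictMono K := by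
      intro K hK
      rw [Fintype.mem_piFinset] at hK
      refine Fin.strictMono_iff_lt_succ.2 fun r => ?_
      have h := hK r.castSucc
      simp only [A, Fin.lastCases_castSucc, Finset.mem_Ico] at h
      exact h.2.trans_le (hA' _ _ (hK r.succ))
    have hrow : rowDiff (W.submatrix f g) =
        fun r => ∑ j ∈ A r, fun s => rowDiff W j (g s) := by
      ext r s
      induction r using Fin.lastCases with
      | last =>
        have := sum_rowDiff W (f (Fin.last k)) (g s)
        simpa [A] using this
      | cast r =>
        have := sum_rowDiff_Ico W (hf (Fin.castSucc_lt_succ (i := r))).le (g s)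
        simpa [A] using this
    -- Expand the determinant of the row differences of the minor by multilinearity.
    have hdet : (W.submatrix f g).det =
        ∑ K ∈ Fintype.piFinset A, ((rowDiff W).submatrix K g).det := by
      rw [← det_rowDiff, hrow]
      exact (Matrix.detRowAlternating (n := Fin (k + 1)) (R := ℝ)).toMultilinearMap.map_sum_finset
        (fun _ j s => rowDiff W j (g s)) A
    rw [hdet]
    refine Finset.sum_pos' (fun K hK => (key (hmono K hK)).1) ?_
    by_cases hgl : g (Fin.last k) = Fin.last n
    · -- The last row index must be moved to `Fin.last n` to meet the last column.
      refine ⟨Function.update f (Fin.last k) (Fin.last n), ?_, ?_⟩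
      · rw [Fintype.mem_piFinset]
        intro r
        induction r using Fin.lastCases with
        | last => simp [A, Fin.le_last]
        | cast r => simpa using hA r.castSucc
      · refine (key (hmono _ ?_)).2 (by simp [hgl]) ?_
        · rw [Fintype.mem_piFinset]
          intro r
          induction r using Fin.lastCases with
          | last => simp [A, Fin.le_last]
          | cast r => simpa using hA r.castSucc
        · intro r
          induction r using Fin.lastCases with
          | last => simp [hgl]
          | cast r => simpa using hfg r.castSucc
    · refine ⟨f, Fintype.mem_piFinset.2 hA, (key hf).2 ?_ hfg⟩
      refine iff_of_false (fun h => hgl ?_) hgl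
      exact le_antisymm (Fin.le_last _) (h ▸ hfg _)

lemma last_col_pos {n : ℕ} {U : Matrix (Fin (n + 1)) (Fin (n + 1)) ℝ}
    (ht : ∀ i j, j < i → U i j = 0) (hd : ∀ i, 0 < U i i) (hU : FlagPos U) (i : Fin (n + 1)) :
    0 < U i (Fin.last n) := by
  have hi : (i : ℕ) ≤ n := by omega
  have h := hU (i + 1) (by omega) _ (strictMono_snoc (Fin.strictMono_castLE hi))
  rw [Matrix.det_of_isUpperTriangular, Fin.prod_univ_castSucc] at h
  · have e : Fin.castLE (by omega : (i : ℕ) + 1 ≤ n + 1) (Fin.last i) = i := rfl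
    simp only [submatrix_apply, Fin.lastCases_last, Fin.lastCases_castSucc, e] at h
    refine pos_of_mul_pos_right h (Finset.prod_nonneg fun r _ => ?_)
    exact (hd (Fin.castLE hi r).castSucc).le
  · intro r s hrs
    induction s using Fin.lastCases with
    | last => exact absurd hrs (not_lt.2 (Fin.le_last _))
    | cast s =>
      simp only [submatrix_apply, Fin.lastCases_castSucc]
      exact ht _ _ hrs

/-- An upper triangular matrix with positive diagonal and positive flag minors is totally
positive. -/
theorem tpos_of_flagPos : ∀ {n : ℕ} {U : Matrix (Fin n) (Fin n) ℝ},
    (∀ i j, j < i → U i j = 0) → (∀ i, 0 < U i i) → FlagPos U → TPos U := by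
  intro n
  induction n with
  | zero =>
    intro U _ _ _ k f g _ _ _
    cases k with
    | zero => simp
    | succ k => exact (f 0).elim0
  | succ n ih =>
    intro U ht hd hU
    have hc := last_col_pos ht hd hU
    -- Rescale the rows so that the last column becomes constant.
    let W : Matrix (Fin (n + 1)) (Fin (n + 1)) ℝ :=
      Matrix.of fun i j => (U i (Fin.last n))⁻¹ * U i j
    have hdet : ∀ {k : ℕ} (f g : Fin k → Fin (n + 1)), (W.submatrix f g).det =
        (∏ r, (U (f r) (Fin.last n))⁻¹) * (U.submatrix f g).det := fun f g =>
      Matrix.det_mul_column (fun r => (U (f r) (Fin.last n))⁻¹) (U.submatrix f g)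
    have hpos : ∀ {k : ℕ} (f : Fin k → Fin (n + 1)), 0 < ∏ r, (U (f r) (Fin.last n))⁻¹ :=
      fun f => Finset.prod_pos fun r _ => inv_pos.2 (hc _)
    have htW : ∀ i j, j < i → W i j = 0 := fun i j h => by simp [W, ht i j h]
    have h1 : ∀ i, W i (Fin.last n) = 1 := fun i => by simp [W, (hc i).ne']
    have hW : FlagPos W := fun k hk J hJ => by
      rw [hdet]; exact mul_pos (hpos _) (hU k hk J hJ)
    have hTW : TPos W := by
      refine tpos_of_rowDiff htW h1 (ih ?_ ?_ (flagPos_rowDiff h1 hW))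
      · intro i j h
        have h' : j.castSucc < i.castSucc := by simpa using h
        simp [htW _ _ h', htW _ _ (h'.trans (Fin.castSucc_lt_succ (i := i)))]
      · intro i
        have h0 := htW _ _ (Fin.castSucc_lt_succ (i := i))
        simp [h0, W, inv_pos.2 (hc _), hd]
    intro k f g hf hg hfg
    have := hTW k f g hf hg hfg
    rw [hdet] at this
    exact pos_of_mul_pos_right this (hpos f).le

/-! ### Totally positive unipotent matrices -/

lemma gminor_eq {n k : ℕ} (A : Matrix (Fin n) (Fin n) ℝ) {I J : Finset (Fin n)}
    (hI : I.card = k) (hJ : J.card = k) :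
    gminor A I J = (A.submatrix (I.orderEmbOfFin hI) (J.orderEmbOfFin hJ)).det := by
  subst hI
  rw [gminor, dif_pos hJ]
  rfl

lemma gminor_image {n k : ℕ} (A : Matrix (Fin n) (Fin n) ℝ) {f g : Fin k → Fin n}
    (hf : StrictMono f) (hg : StrictMono g) :
    gminor A (Finset.univ.image f) (Finset.univ.image g) = (A.submatrix f g).det := by
  have hI : (Finset.univ.image f).card = k := by
    rw [Finset.card_image_of_injective _ hf.injective]; simp
  have hJ : (Finset.univ.image g).card = k := by
    rw [Finset.card_image_of_injective _ hg.injective]; simp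
  rw [gminor_eq A hI hJ, ← Finset.orderEmbOfFin_unique hI (by simp) hf,
    ← Finset.orderEmbOfFin_unique hJ (by simp) hg]

/-- A minor is not identically zero on `N_n` as soon as its rows are entrywise at most its columns:
it equals `1` at the matrix with ones exactly on the diagonal and at the positions `(f r, g r)`. -/
lemma exists_minor_ne_zero {n k : ℕ} {f g : Fin k → Fin n} (hf : StrictMono f)
    (hg : StrictMono g) (h : ∀ r, f r ≤ g r) : ∃ A ∈ Nset n, (A.submatrix f g).det ≠ 0 := by
  classical
  refine ⟨Matrix.of fun i j => if i = j ∨ ∃ r, i = f r ∧ j = g r then 1 else 0, ⟨?_, by simp⟩, ?_⟩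
  · intro i j hij
    rw [of_apply, if_neg]
    rintro (e | ⟨r, rfl, rfl⟩)
    · exact hij.ne' e
    · exact absurd hij (not_lt.2 (h r))
  · rw [Matrix.det_of_isLowerTriangular]
    · refine Finset.prod_ne_zero_iff.2 fun r _ => ?_
      have : f r = g r ∨ ∃ x, f r = f x ∧ g r = g x := Or.inr ⟨r, rfl, rfl⟩
      simp [this]
    · intro r s hrs
      have hrs : r < s := hrs
      rw [submatrix_apply, of_apply, if_neg]
      rintro (e | ⟨x, h1, h2⟩)
      · exact absurd (hg hrs) (not_lt.2 (e ▸ h r))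
      · exact hrs.ne ((hf.injective h1).trans (hg.injective h2).symm)

lemma npos_iff {n : ℕ} {M : Matrix (Fin n) (Fin n) ℝ} : Npos n M ↔ M ∈ Nset n ∧ TPos M := by
  constructor
  · rintro ⟨hM, h⟩
    refine ⟨hM, fun k f g hf hg hfg => ?_⟩
    rw [← gminor_image M hf hg]
    refine h _ _ ?_ ?_
    · rw [Finset.card_image_of_injective _ hf.injective,
        Finset.card_image_of_injective _ hg.injective]
    · obtain ⟨A, hA, hA'⟩ := exists_minor_ne_zero hf hg hfg
      exact ⟨A, hA, by rwa [gminor_image A hf hg]⟩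
  · rintro ⟨hM, h⟩
    refine ⟨hM, ?_⟩
    rintro I J hIJ ⟨A, hA, hA'⟩
    rw [gminor_eq _ rfl hIJ.symm] at hA' ⊢
    refine h _ _ _ (OrderEmbedding.strictMono _) (OrderEmbedding.strictMono _) ?_
    by_contra! hr
    obtain ⟨r, hr⟩ := hr
    exact hA' (det_submatrix_eq_zero (fun i j hij => hA.1 hij) (OrderEmbedding.strictMono _)
      (OrderEmbedding.strictMono _) hr)

lemma mul_diag {n : ℕ} {A B : Matrix (Fin n) (Fin n) ℝ} (hA : A.BlockTriangular id)
    (hB : B.BlockTriangular id) (i : Fin n) : (A * B) i i = A i i * B i i := by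
  rw [Matrix.mul_apply]
  refine Finset.sum_eq_single i (fun l _ hl => ?_) (by simp)
  rcases lt_or_gt_of_ne hl with h | h
  · rw [hA h, zero_mul]
  · rw [hB h, mul_zero]

lemma Nset_det {n : ℕ} {A : Matrix (Fin n) (Fin n) ℝ} (hA : A ∈ Nset n) : A.det = 1 := by
  rw [Matrix.det_of_isUpperTriangular hA.1]
  exact Finset.prod_eq_one fun i _ => hA.2 i

lemma Nset_mul {n : ℕ} {A B : Matrix (Fin n) (Fin n) ℝ} (hA : A ∈ Nset n) (hB : B ∈ Nset n) :
    A * B ∈ Nset n :=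
  ⟨hA.1.mul hB.1, fun i => by rw [mul_diag hA.1 hB.1, hA.2, hB.2, one_mul]⟩

lemma inv_triangular {n : ℕ} {A : Matrix (Fin n) (Fin n) ℝ} (hA : A.BlockTriangular id)
    (h : IsUnit A.det) : A⁻¹.BlockTriangular id := by
  let := Matrix.invertibleOfIsUnitDet A h
  exact Matrix.blockTriangular_inv_of_blockTriangular hA

lemma Nset_inv {n : ℕ} {A : Matrix (Fin n) (Fin n) ℝ} (hA : A ∈ Nset n) : A⁻¹ ∈ Nset n := by
  have hu : IsUnit A.det := by rw [Nset_det hA]; exact isUnit_one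
  have ht := inv_triangular hA.1 hu
  refine ⟨ht, fun i => ?_⟩
  have h := mul_diag hA.1 ht i
  rw [Matrix.mul_nonsing_inv _ hu, hA.2, one_mul] at h
  simpa using h.symm

lemma Nset_rev {n : ℕ} {A : Matrix (Fin n) (Fin n) ℝ} (hA : A ∈ Nset n) :
    (A.submatrix Fin.rev Fin.rev)ᵀ ∈ Nset n :=
  ⟨fun i j hij => hA.1 (show Fin.rev i < Fin.rev j from Fin.rev_lt_rev.2 hij), fun _ => hA.2 _⟩

lemma strictMono_rev {n k : ℕ} {f : Fin k → Fin n} (hf : StrictMono f) :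
    StrictMono fun r : Fin k => (f r.rev).rev :=
  fun _ _ h => Fin.rev_lt_rev.2 (hf (Fin.rev_lt_rev.2 h))

/-- Total positivity is invariant under reflection in the antidiagonal. -/
lemma TPos.rev {n : ℕ} {A : Matrix (Fin n) (Fin n) ℝ} (hA : TPos A) :
    TPos (A.submatrix Fin.rev Fin.rev)ᵀ := by
  intro k f g hf hg hfg
  have h := hA k _ _ (strictMono_rev hg) (strictMono_rev hf)
    fun r => Fin.rev_le_rev.2 (hfg r.rev)
  rw [← Matrix.det_submatrix_equiv_self Fin.revPerm, ← Matrix.det_transpose] at h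
  convert h using 2
  ext r s
  simp

/-! ### Triangular factorization -/

lemma sum_castLE {k n : ℕ} (hk : k ≤ n) (g : Fin n → ℝ) (h : ∀ i : Fin n, k ≤ (i : ℕ) → g i = 0) :
    ∑ i : Fin k, g (Fin.castLE hk i) = ∑ i, g i := by
  refine Finset.sum_of_injOn (Fin.castLE hk) (Fin.castLE_injective hk).injOn (by simp) ?_ (by simp)
  intro i _ hi
  refine h i ?_
  by_contra! hlt
  exact hi ⟨⟨i, hlt⟩, by simp, by ext; rfl⟩

/-- Nonzero leading principal minors give a factorization `L * D * U`. The inverse of the factor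
`L * D` is built first: its rows are the last rows of the inverses of the leading blocks. -/
lemma exists_ldu {n : ℕ} {A : Matrix (Fin n) (Fin n) ℝ}
    (hA : ∀ k (hk : k ≤ n), (A.submatrix (Fin.castLE hk) (Fin.castLE hk)).det ≠ 0) :
    ∃ (L U : Matrix (Fin n) (Fin n) ℝ) (d : Fin n → ℝ),
      Lᵀ ∈ Nset n ∧ U ∈ Nset n ∧ A = L * Matrix.diagonal d * U := by
  have key : ∀ i : Fin n, ∃ x : Fin n → ℝ, (∀ l, i < l → x l = 0) ∧
      (∀ j, j < i → ∑ l, x l * A l j = 0) ∧ ∑ l, x l * A l i = 1 := by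
    intro i
    have hk : (i : ℕ) + 1 ≤ n := i.2
    set B := A.submatrix (Fin.castLE hk) (Fin.castLE hk) with hB
    have hu : IsUnit B.det := isUnit_iff_ne_zero.2 (hA _ hk)
    let x : Fin n → ℝ := fun l =>
      if h : (l : ℕ) < i + 1 then B⁻¹ (Fin.last i) ⟨l, h⟩ else 0
    have hx : ∀ l : Fin n, (i : ℕ) + 1 ≤ l → x l = 0 := fun l hl => dif_neg (by omega)
    have hs : ∀ j : Fin (i + 1), ∑ l, x l * A l (Fin.castLE hk j) =
        (1 : Matrix (Fin (i + 1)) (Fin (i + 1)) ℝ) (Fin.last i) j := by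
      intro j
      rw [← Matrix.nonsing_inv_mul B hu, Matrix.mul_apply,
        ← sum_castLE hk _ fun l hl => by rw [hx l hl, zero_mul]]
      refine Finset.sum_congr rfl fun l _ => ?_
      have : x (Fin.castLE hk l) = B⁻¹ (Fin.last i) l := dif_pos l.2
      rw [this]; rfl
    refine ⟨x, fun l hl => hx l hl, fun j hj => ?_, ?_⟩
    · have hj' : (j : ℕ) < i := hj
      have := hs ⟨j, by omega⟩
      rw [Matrix.one_apply_ne (by simp [Fin.ext_iff]; omega)] at this
      exact this
    · have := hs (Fin.last i)
      rw [Matrix.one_apply_eq] at this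
      exact this
  choose x hx1 hx2 hx3 using key
  let X : Matrix (Fin n) (Fin n) ℝ := Matrix.of x
  have hU : X * A ∈ Nset n :=
    ⟨fun i j hij => hx2 i j hij, fun i => hx3 i⟩
  have hXt : Xᵀ.BlockTriangular id := fun i j hij => hx1 _ _ hij
  have hdet : X.det * A.det = 1 := by rw [← Matrix.det_mul, Nset_det hU]
  have huX : IsUnit X.det := IsUnit.of_mul_eq_one _ hdet
  have huXt : IsUnit Xᵀ.det := by rwa [Matrix.det_transpose]
  have hY : (X⁻¹)ᵀ.BlockTriangular id := by
    rw [Matrix.transpose_nonsing_inv]; exact inv_triangular hXt huXt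
  have hd : ∀ i, X⁻¹ i i ≠ 0 := by
    intro i hi
    have h := mul_diag hXt hY i
    rw [← Matrix.transpose_mul, Matrix.nonsing_inv_mul _ huX] at h
    simp [hi] at h
  refine ⟨Matrix.of fun i j => X⁻¹ i j / X⁻¹ j j, X * A, fun i => X⁻¹ i i,
    ⟨fun i j hij => ?_, fun i => ?_⟩, hU, ?_⟩
  · have : X⁻¹ j i = 0 := hY hij
    simp [this]
  · simp [hd i]
  · have : (Matrix.of fun i j => X⁻¹ i j / X⁻¹ j j) * Matrix.diagonal (fun i => X⁻¹ i i) = X⁻¹ := by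
      ext i j
      rw [Matrix.mul_diagonal, of_apply, div_mul_cancel₀ _ (hd j)]
    rw [this, ← Matrix.mul_assoc, Matrix.nonsing_inv_mul _ huX, Matrix.one_mul]

lemma ldu_unique {n : ℕ} {L₁ L₂ U₁ U₂ : Matrix (Fin n) (Fin n) ℝ} {d₁ d₂ : Fin n → ℝ}
    (hL₁ : L₁ᵀ ∈ Nset n) (hL₂ : L₂ᵀ ∈ Nset n) (hU₁ : U₁ ∈ Nset n) (hU₂ : U₂ ∈ Nset n)
    (hne : (L₁ * Matrix.diagonal d₁ * U₁).det ≠ 0)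
    (h : L₁ * Matrix.diagonal d₁ * U₁ = L₂ * Matrix.diagonal d₂ * U₂) :
    L₁ = L₂ ∧ d₁ = d₂ ∧ U₁ = U₂ := by
  have uL₂ : IsUnit L₂.det := by rw [← Matrix.det_transpose, Nset_det hL₂]; exact isUnit_one
  have uU₁ : IsUnit U₁.det := by rw [Nset_det hU₁]; exact isUnit_one
  have hd : ∀ i, d₁ i ≠ 0 := by
    rw [Matrix.det_mul, Matrix.det_mul, Matrix.det_diagonal] at hne
    intro i
    exact Finset.prod_ne_zero_iff.1 (right_ne_zero_of_mul (left_ne_zero_of_mul hne)) i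
      (Finset.mem_univ i)
  set R := L₂⁻¹ * L₁ with hR
  set Q := U₂ * U₁⁻¹ with hQ
  have hRN : Rᵀ ∈ Nset n := by
    rw [hR, Matrix.transpose_mul, Matrix.transpose_nonsing_inv]
    exact Nset_mul hL₁ (Nset_inv hL₂)
  have hQN : Q ∈ Nset n := Nset_mul hU₂ (Nset_inv hU₁)
  have e : R * Matrix.diagonal d₁ = Matrix.diagonal d₂ * Q := by
    calc R * Matrix.diagonal d₁ = L₂⁻¹ * (L₁ * Matrix.diagonal d₁ * U₁) * U₁⁻¹ := by
          simp only [hR, Matrix.mul_assoc, Matrix.mul_nonsing_inv _ uU₁, Matrix.mul_one]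
      _ = L₂⁻¹ * L₂ * Matrix.diagonal d₂ * Q := by
          rw [h]; simp only [hQ, Matrix.mul_assoc]
      _ = Matrix.diagonal d₂ * Q := by rw [Matrix.nonsing_inv_mul _ uL₂, Matrix.one_mul]
  have e' : ∀ i j, R i j * d₁ j = d₂ i * Q i j := by
    intro i j
    have := congrFun (congrFun e i) j
    rwa [Matrix.mul_diagonal, Matrix.diagonal_mul] at this
  have hdd : d₁ = d₂ := by
    ext i
    have h1 : R i i = 1 := hRN.2 i
    have := e' i i
    rwa [h1, hQN.2 i, one_mul, mul_one] at this
  have hR1 : R = 1 := by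
    ext i j
    rcases lt_trichotomy i j with hij | rfl | hij
    · rw [Matrix.one_apply_ne hij.ne]; exact hRN.1 hij
    · rw [Matrix.one_apply_eq]; exact hRN.2 i
    · rw [Matrix.one_apply_ne hij.ne']
      have := e' i j
      rw [hQN.1 hij, mul_zero] at this
      exact (mul_eq_zero.1 this).resolve_right (hd j)
  have hQ1 : Q = 1 := by
    rw [hR1, ← hdd, Matrix.one_mul] at e
    ext i j
    have := congrFun (congrFun e i) j
    rw [Matrix.diagonal_mul] at this
    rcases eq_or_ne i j with rfl | hij
    · rw [Matrix.one_apply_eq]; exact hQN.2 i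
    · rw [Matrix.diagonal_apply_ne _ hij] at this
      rw [Matrix.one_apply_ne hij]
      exact (mul_eq_zero.1 this.symm).resolve_left (hd i)
  refine ⟨?_, hdd, ?_⟩
  · rw [← Matrix.mul_one L₂, ← hR1, hR, ← Matrix.mul_assoc, Matrix.mul_nonsing_inv _ uL₂,
      Matrix.one_mul]
  · rw [← Matrix.one_mul U₁, ← hQ1, hQ, Matrix.mul_assoc, Matrix.nonsing_inv_mul _ uU₁,
      Matrix.mul_one]

/-- The first `k` rows of `L * D * U` involve only the leading blocks of `L` and `D`, so passing to
`U` divides all flag minors of a given size by the same factor. -/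
lemma flag_minor_ldu {n k : ℕ} {L U : Matrix (Fin n) (Fin n) ℝ} {d : Fin n → ℝ}
    (hL : Lᵀ ∈ Nset n) (hk : k ≤ n) (J : Fin k → Fin n) :
    ((L * Matrix.diagonal d * U).submatrix (Fin.castLE hk) J).det =
      (∏ r, d (Fin.castLE hk r)) * (U.submatrix (Fin.castLE hk) J).det := by
  have e : (L * Matrix.diagonal d * U).submatrix (Fin.castLE hk) J =
      L.submatrix (Fin.castLE hk) (Fin.castLE hk) *
        Matrix.of fun r s => d (Fin.castLE hk r) * U.submatrix (Fin.castLE hk) J r s := by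
    ext r s
    rw [submatrix_apply, Matrix.mul_apply, Matrix.mul_apply, ← sum_castLE hk]
    · refine Finset.sum_congr rfl fun l _ => ?_
      simp [mul_assoc]
    · intro l hl
      have : L (Fin.castLE hk r) l = 0 := hL.1 (show Fin.castLE hk r < l from
        Fin.lt_def.2 (lt_of_lt_of_le r.2 hl))
      simp [this]
  have h1 : (L.submatrix (Fin.castLE hk) (Fin.castLE hk)).det = 1 := by
    rw [Matrix.det_of_isLowerTriangular]
    · exact Finset.prod_eq_one fun r _ => hL.2 _
    · intro r s hrs
      exact hL.1 (show Fin.castLE hk r < Fin.castLE hk s from hrs)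
  rw [e, Matrix.det_mul, h1, one_mul, Matrix.det_mul_column]

/-- If, for each size, all flag minors of `L * D * U` have the same strict sign, then `U` is
totally positive. -/
lemma tpos_of_ldu {n : ℕ} {L U : Matrix (Fin n) (Fin n) ℝ} {d : Fin n → ℝ}
    (hL : Lᵀ ∈ Nset n) (hU : U ∈ Nset n)
    (h : ∀ k (hk : k ≤ n) (J : Fin k → Fin n), StrictMono J →
      ∃ p > 0, ((L * Matrix.diagonal d * U).submatrix (Fin.castLE hk) J).det =
        ((Fin.revPerm (n := k)).sign : ℝ) * p) : TPos U := by
  refine tpos_of_flagPos (fun i j hij => hU.1 hij) (fun i => by simp [hU.2 i]) ?_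
  intro k hk J hJ
  obtain ⟨p, hp, ep⟩ := h k hk J hJ
  obtain ⟨q, hq, eq⟩ := h k hk _ (Fin.strictMono_castLE hk)
  rw [flag_minor_ldu hL] at ep eq
  have h1 : (U.submatrix (Fin.castLE hk) (Fin.castLE hk)).det = 1 := by
    rw [Matrix.det_of_isUpperTriangular]
    · exact Finset.prod_eq_one fun r _ => hU.2 _
    · intro r s hrs
      exact hU.1 (show Fin.castLE hk s < Fin.castLE hk r from hrs)
  have hs : ((Fin.revPerm (n := k)).sign : ℝ) ≠ 0 := by
    rcases Int.units_eq_one_or (Fin.revPerm (n := k)).sign with h | h <;> simp [h]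
  rw [h1, mul_one] at eq
  rw [eq, mul_assoc] at ep
  have := mul_left_cancel₀ hs ep
  exact pos_of_mul_pos_right (this ▸ hp) hq.le

/-! ### The decomposition -/

lemma castLE_le_of_strictMono {n k : ℕ} (hk : k ≤ n) {g : Fin k → Fin n} (hg : StrictMono g)
    (r : Fin k) : Fin.castLE hk r ≤ g r := by
  obtain ⟨m, hm⟩ := r
  induction m with
  | zero => simp [Fin.le_def]
  | succ m ih =>
    have h1 := ih (by omega)
    have h2 : g ⟨m, by omega⟩ < g ⟨m + 1, hm⟩ := hg (by simp [Fin.lt_def])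
    rw [Fin.le_def] at h1 ⊢
    rw [Fin.lt_def] at h2
    simp only [Fin.val_castLE] at h1 ⊢
    omega

lemma Pmat_apply {n : ℕ} (i j : Fin n) : Pmat n i j = if j = i.rev then 1 else 0 := by
  rw [Pmat, of_apply]
  refine if_congr ?_ rfl rfl
  rw [Fin.ext_iff, Fin.val_rev]
  omega

lemma Pmat_mul {n : ℕ} (A : Matrix (Fin n) (Fin n) ℝ) : Pmat n * A = A.submatrix Fin.rev id := by
  ext i j
  simp [Matrix.mul_apply, Pmat_apply]

lemma mul_Pmat {n : ℕ} (A : Matrix (Fin n) (Fin n) ℝ) : A * Pmat n = A.submatrix id Fin.rev := by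
  ext i j
  have : ∀ l : Fin n, j = l.rev ↔ l = j.rev := fun l => by rw [eq_comm, Fin.rev_eq_iff]
  simp [Matrix.mul_apply, Pmat_apply, this]

lemma Pmat_mul_self {n : ℕ} : Pmat n * Pmat n = 1 := by
  rw [Pmat_mul]
  ext i j
  simp [Pmat_apply, Matrix.one_apply, eq_comm]

/-- Multiplying by `P` on the left turns the decomposition into an `LDU` factorization of
`M * P`. -/
lemma eq_iff_ldu {n : ℕ} (M M₁ M₂ D : Matrix (Fin n) (Fin n) ℝ) :
    Pmat n * M * Pmat n = M₁ * Pmat n * D * M₂ ↔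
      M.submatrix id Fin.rev = M₁.submatrix Fin.rev Fin.rev * D * M₂ := by
  have e : M₁.submatrix Fin.rev Fin.rev = Pmat n * M₁ * Pmat n := by
    rw [mul_Pmat, Pmat_mul]; rfl
  rw [e, ← mul_Pmat]
  constructor
  · intro h
    calc M * Pmat n = (Pmat n * Pmat n) * M * Pmat n := by rw [Pmat_mul_self, Matrix.one_mul]
      _ = Pmat n * (Pmat n * M * Pmat n) := by simp only [Matrix.mul_assoc]
      _ = _ := by rw [h]; simp only [Matrix.mul_assoc]
  · intro h
    calc Pmat n * M * Pmat n = Pmat n * (M * Pmat n) := by rw [Matrix.mul_assoc]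
      _ = (Pmat n * Pmat n) * (M₁ * Pmat n * D * M₂) := by
        rw [h]; simp only [Matrix.mul_assoc]
      _ = _ := by rw [Pmat_mul_self, Matrix.one_mul]

lemma det_rev_cols {n k : ℕ} (M : Matrix (Fin n) (Fin n) ℝ) (f g : Fin k → Fin n) :
    ((M.submatrix id Fin.rev).submatrix f g).det =
      ((Fin.revPerm (n := k)).sign : ℝ) * (M.submatrix f fun r => (g r.rev).rev).det := by
  rw [← Matrix.det_permute']
  congr 1
  ext r s
  simp

/-- For each size, the flag minors of `M * P` have the same strict sign. -/
lemma flag_minor_rev {n k : ℕ} {M : Matrix (Fin n) (Fin n) ℝ} (hM : TPos M) (hk : k ≤ n)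
    {J : Fin k → Fin n} (hJ : StrictMono J) :
    ∃ p > 0, ((M.submatrix id Fin.rev).submatrix (Fin.castLE hk) J).det =
      ((Fin.revPerm (n := k)).sign : ℝ) * p :=
  ⟨_, hM _ _ _ (Fin.strictMono_castLE hk) (strictMono_rev hJ)
    (castLE_le_of_strictMono hk (strictMono_rev hJ)), det_rev_cols M _ _⟩

/-- The transposed counterpart: minors of `M * P` on initial intervals of columns. -/
lemma flag_minor_rev_transpose {n k : ℕ} {M : Matrix (Fin n) (Fin n) ℝ} (hM : TPos M)
    (hk : k ≤ n) {J : Fin k → Fin n} (hJ : StrictMono J) :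
    ∃ p > 0, ((M.submatrix id Fin.rev)ᵀ.submatrix (Fin.castLE hk) J).det =
      ((Fin.revPerm (n := k)).sign : ℝ) * p := by
  refine ⟨_, hM _ _ _ hJ (strictMono_rev (Fin.strictMono_castLE hk)) fun r => ?_, ?_⟩
  · have := castLE_le_of_strictMono hk (strictMono_rev hJ) r.rev
    rw [Fin.rev_rev] at this
    exact Fin.le_rev_iff.1 this
  · rw [← det_rev_cols, ← Matrix.det_transpose]
    rfl

/-- For every `M ∈ N_n^+` there exist unique `M′, M″ ∈ N_n^+` and a unique diagonal
matrix `D_M` with `P M P = M′ P D_M M″`. -/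
theorem stmt_4 (n : ℕ) (hn : 2 ≤ n) (M : Matrix (Fin n) (Fin n) ℝ) (hM : Npos n M) :
    ∃! T : Matrix (Fin n) (Fin n) ℝ × Matrix (Fin n) (Fin n) ℝ × Matrix (Fin n) (Fin n) ℝ,
      Decomp n M T.1 T.2.1 T.2.2 := by
  obtain ⟨hMN, hMT⟩ := npos_iff.1 hM
  obtain ⟨L, U, d, hL, hU, hA⟩ := exists_ldu (A := M.submatrix id Fin.rev) fun k hk => by
    obtain ⟨p, hp, e⟩ := flag_minor_rev hMT hk (Fin.strictMono_castLE hk)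
    rw [e]
    rcases Int.units_eq_one_or (Fin.revPerm (n := k)).sign with h | h <;> simp [h, hp.ne']
  have hUT : TPos U := tpos_of_ldu hL hU (d := d) fun k hk J hJ => by
    rw [← hA]; exact flag_minor_rev hMT hk hJ
  have hLT : TPos Lᵀ := tpos_of_ldu (L := Uᵀ) (d := d) (by rwa [transpose_transpose]) hL
    fun k hk J hJ => by
      have e : Uᵀ * Matrix.diagonal d * Lᵀ = (M.submatrix id Fin.rev)ᵀ := by
        rw [hA]; simp [Matrix.transpose_mul, Matrix.mul_assoc]
      rw [e]; exact flag_minor_rev_transpose hMT hk hJ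
  have hne : (L * Matrix.diagonal d * U).det ≠ 0 := by
    have : M.submatrix id Fin.rev = M.submatrix id Fin.revPerm := rfl
    rw [← hA, this, Matrix.det_permute', Nset_det hMN, mul_one]
    rcases Int.units_eq_one_or (Fin.revPerm (n := n)).sign with h | h <;> simp [h]
  refine ⟨(L.submatrix Fin.rev Fin.rev, U, Matrix.diagonal d), ⟨?_, ?_, ?_, ?_⟩, ?_⟩
  · exact npos_iff.2 ⟨Nset_rev hL, hLT.rev⟩
  · exact npos_iff.2 ⟨hU, hUT⟩
  · exact Matrix.isDiag_diagonal d
  · rw [eq_iff_ldu, hA]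
    simp [Matrix.submatrix_submatrix, Function.comp_def]
    rfl
  · rintro ⟨M₁, M₂, D⟩ ⟨h1, h2, h3, h4⟩
    rw [eq_iff_ldu] at h4
    simp only at h1 h2 h3 h4
    rw [← h3.diagonal_diag, hA] at h4
    obtain ⟨e1, e2, e3⟩ := ldu_unique hL (Nset_rev h1.1) hU h2.1 hne h4
    refine Prod.ext ?_ (Prod.ext e3.symm ?_)
    · rw [e1]
      ext i j
      simp
    · rw [e2]
      exact h3.diagonal_diag.symm

end
end
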